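/- Let A, B ∈ ℂ[x,y] be homogeneous of degree 4 without common factor, and suppose D = (∂A/∂x)(∂B/∂y) − (∂A/∂y)(∂B/∂x) = c·ℓ₁ℓ₂ℓ₃²ℓ₄² for some c ∈ ℂ∖{0} and pairwise non-proportional linear forms ℓ₁, ℓ₂, ℓ₃, ℓ₄ each dividing C = xA + yB (i.e. the homogeneous foliation defined by ω = A dx + B dy is convex of type 2·R₁+2·R₂). Then ω is linearly conjugate to ω₄ = y³(4x+y)dx + x³(x+4y)dy. -/

import Mathlib

open MvPolynomial

noncomputable section

/-- Polynomials in two variables `x = X 0`, `y = X 1` over `ℂ`. -/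
abbrev P2 : Type := MvPolynomial (Fin 2) ℂ

/-- The inflection polynomial `D_ω = A_x B_y - A_y B_x` of `ω = A dx + B dy`. -/
def Dpoly (A B : P2) : P2 :=
  pderiv 0 A * pderiv 1 B - pderiv 1 A * pderiv 0 B

/-- The tangent cone `C_ω = xA + yB` of `ω = A dx + B dy`. -/
def Cpoly (A B : P2) : P2 := X 0 * A + X 1 * B

/-- `A` and `B` have no common (non-unit) factor. -/
def NoCommonFactor (A B : P2) : Prop := ∀ p : P2, p ∣ A → p ∣ B → IsUnit p

/-- Convexity: every linear factor of `D_ω` divides `C_ω`. -/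
def IsConvexPair (A B : P2) : Prop :=
  ∀ l : P2, l.IsHomogeneous 1 → l ≠ 0 → l ∣ Dpoly A B → l ∣ Cpoly A B

/-- Composition of a polynomial with the linear map `φ(x,y) = (a₁x + a₂y, a₃x + a₄y)`. -/
def comp2 (a₁ a₂ a₃ a₄ : ℂ) (p : P2) : P2 :=
  aeval ![C a₁ * X 0 + C a₂ * X 1, C a₃ * X 0 + C a₄ * X 1] p

/-- `ω = A dx + B dy` is linearly conjugate to `ω' = A' dx + B' dy`:
`φ*ω = λ ω'` for some `φ ∈ GL₂(ℂ)` and `λ ∈ ℂ \ {0}`. -/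
def LinConj (A B A' B' : P2) : Prop :=
  ∃ a₁ a₂ a₃ a₄ lam : ℂ, a₁ * a₄ - a₂ * a₃ ≠ 0 ∧ lam ≠ 0 ∧
    C a₁ * comp2 a₁ a₂ a₃ a₄ A + C a₃ * comp2 a₁ a₂ a₃ a₄ B = C lam * A' ∧
    C a₂ * comp2 a₁ a₂ a₃ a₄ A + C a₄ * comp2 a₁ a₂ a₃ a₄ B = C lam * B'

/-- ω₁ = y⁴dx − x⁴dy -/
def A1 : P2 := X 1 ^ 4
def B1 : P2 := -X 0 ^ 4
/-- ω₂ = y³(2x−y)dx + x³(x−2y)dy -/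
def A2 : P2 := X 1 ^ 3 * (2 * X 0 - X 1)
def B2 : P2 := X 0 ^ 3 * (X 0 - 2 * X 1)
/-- ω₃ = y²(6x²+4xy+y²)dx − x³(x+4y)dy -/
def A3 : P2 := X 1 ^ 2 * (6 * X 0 ^ 2 + 4 * X 0 * X 1 + X 1 ^ 2)
def B3 : P2 := -(X 0 ^ 3 * (X 0 + 4 * X 1))
/-- ω₄ = y³(4x+y)dx + x³(x+4y)dy -/
def A4 : P2 := X 1 ^ 3 * (4 * X 0 + X 1)
def B4 : P2 := X 0 ^ 3 * (X 0 + 4 * X 1)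
/-- ω₅ = y²(6x²+4xy+y²)dx + 3x⁴dy -/
def A5 : P2 := X 1 ^ 2 * (6 * X 0 ^ 2 + 4 * X 0 * X 1 + X 1 ^ 2)
def B5 : P2 := 3 * X 0 ^ 4


/-- Two polynomials are proportional (one is a constant multiple of the other). -/
def Proportional (l₁ l₂ : P2) : Prop := ∃ t : ℂ, l₁ = C t * l₂ ∨ l₂ = C t * l₁

/-!
Each of the four lines divides `C`, so `C = ℓ₁ℓ₂ℓ₃ℓ₄ · m` with `m` linear. Since `C` and, up to
a constant, `D` are covariant under linear pullback, one may assume `ℓ₃ = x` and `ℓ₄ = y`.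
By Euler's identity `y D = n (A_x B - A B_x)`, and when `x` divides `B` but not `A` this has order
along `x = 0` exactly one less than `B`. Hence `x² ∣ D` forces `x³ ∣ B`, and likewise `y³ ∣ A`.
This leaves `A = y³(αx + βy)` and `B = x³(γx + δy)`, for which `C / xy` is a binary cubic and
`D / x²y²` a binary quadratic proportional to `ℓ₁ℓ₂`, which divides the cubic. The distinctness of
`ℓ₁` and `ℓ₂` leaves one solution `(α, β, γ, δ)` up to rescaling `y` and the form.
-/

section LinearSubstitution

variable {σ R : Type*} [Fintype σ] [CommRing R]

/-- The substitution `p ↦ p ∘ M` of the linear map with matrix `M`, that is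
`X i ↦ ∑ j, M i j * X j`. -/
def linSubst (M : Matrix σ σ R) : MvPolynomial σ R →ₐ[R] MvPolynomial σ R :=
  bind₁ M.toMvPolynomial

lemma linSubst_X (M : Matrix σ σ R) (i : σ) : linSubst M (X i) = ∑ j, C (M i j) * X j := by
  simp only [linSubst, bind₁_X_right, Matrix.toMvPolynomial, C_mul_X_eq_monomial]

lemma linSubst_C (M : Matrix σ σ R) (r : R) : linSubst M (C r) = C r :=
  bind₁_C_right _ r

lemma linSubst_linSubst (M N : Matrix σ σ R) (p : MvPolynomial σ R) :
    linSubst N (linSubst M p) = linSubst (M * N) p := by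
  have h_comp : (linSubst N).comp (linSubst M) = linSubst (M * N) :=
    algHom_ext fun i => by
      simp only [linSubst, AlgHom.comp_apply, bind₁_X_right, Matrix.toMvPolynomial_mul]
  exact DFunLike.congr_fun h_comp p

lemma linSubst_one [DecidableEq σ] (p : MvPolynomial σ R) : linSubst (1 : Matrix σ σ R) p = p := by
  rw [linSubst, Matrix.toMvPolynomial_one, bind₁_X_left, AlgHom.id_apply]

lemma isHomogeneous_linSubst (M : Matrix σ σ R) {p : MvPolynomial σ R} {n : ℕ}
    (hp : p.IsHomogeneous n) : (linSubst M p).IsHomogeneous n := by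
  have h_aeval := hp.aeval _ (Matrix.toMvPolynomial_isHomogeneous M)
  rwa [one_mul] at h_aeval

lemma pderiv_linSubst (M : Matrix σ σ R) (p : MvPolynomial σ R) (j : σ) :
    pderiv j (linSubst M p) = ∑ i, C (M i j) * linSubst M (pderiv i p) := by
  classical
  induction p using MvPolynomial.induction_on with
  | C r => simp only [linSubst_C, pderiv_C, map_zero, mul_zero, Finset.sum_const_zero]
  | add p q hp hq => simp only [map_add, hp, hq, mul_add, Finset.sum_add_distrib]
  | mul_X p k hp =>
    have hX : pderiv j (linSubst M (X k)) = C (M k j) := by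
      simp [linSubst_X, pderiv_X, Pi.single_apply]
    have hX' (i : σ) : linSubst M (pderiv i (X k)) = if i = k then 1 else 0 := by
      simp only [pderiv_X, Pi.single_apply, apply_ite (linSubst M), map_one, map_zero, eq_comm]
    simp only [map_mul, map_add, pderiv_mul, hp, hX, hX', mul_add, Finset.sum_add_distrib,
      Finset.sum_mul, mul_assoc, mul_ite, mul_one, mul_zero, Finset.sum_ite_eq',
      Finset.mem_univ, if_true]
    rw [mul_comm (C _)]

/-- The pullback `M*ω` of the 1-form `ω = ∑ i, ω i dXᵢ` by the linear map with matrix `M`, given by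
its coefficients. -/
def pullback (M : Matrix σ σ R) (ω : σ → MvPolynomial σ R) : σ → MvPolynomial σ R :=
  Matrix.vecMul (linSubst M ∘ ω) (M.map C)

lemma pullback_apply (M : Matrix σ σ R) (ω : σ → MvPolynomial σ R) (j : σ) :
    pullback M ω j = ∑ i, C (M i j) * linSubst M (ω i) :=
  Finset.sum_congr rfl fun _ _ => mul_comm _ _

lemma pullback_pullback (M N : Matrix σ σ R) (ω : σ → MvPolynomial σ R) :
    pullback N (pullback M ω) = pullback (M * N) ω := by
  have h_subst : linSubst N ∘ pullback M ω =
      Matrix.vecMul (linSubst (M * N) ∘ ω) (M.map C) := by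
    funext j
    simp only [Function.comp_apply, pullback_apply, map_sum, map_mul, linSubst_C,
      linSubst_linSubst, Matrix.vecMul, dotProduct, Matrix.map_apply, mul_comm]
  rw [pullback, h_subst, Matrix.vecMul_vecMul, pullback, Matrix.map_mul]

lemma pullback_one [DecidableEq σ] (ω : σ → MvPolynomial σ R) :
    pullback (1 : Matrix σ σ R) ω = ω := by
  funext j
  simp only [pullback_apply, linSubst_one, Matrix.one_apply, apply_ite C, C_0, C_1, ite_mul,
    one_mul, zero_mul, Finset.sum_ite_eq', Finset.mem_univ, if_true]

lemma isHomogeneous_pullback (M : Matrix σ σ R) {ω : σ → MvPolynomial σ R} {n : ℕ}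
    (hω : ∀ i, (ω i).IsHomogeneous n) (j : σ) : (pullback M ω j).IsHomogeneous n := by
  rw [pullback_apply]
  exact IsHomogeneous.sum _ _ _ fun i _ => (isHomogeneous_linSubst M (hω i)).C_mul _

lemma linSubst_dvd_pullback (M : Matrix σ σ R) {ω : σ → MvPolynomial σ R} {p : MvPolynomial σ R}
    (hp : ∀ i, p ∣ ω i) (j : σ) : linSubst M p ∣ pullback M ω j := by
  rw [pullback_apply]
  exact Finset.dvd_sum fun i _ => (map_dvd (linSubst M) (hp i)).mul_left _

/-- The tangent cone at the origin of the 1-form `ω = ∑ i, ω i dXᵢ`: its contraction with the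
radial vector field. -/
def tangentCone (ω : σ → MvPolynomial σ R) : MvPolynomial σ R :=
  ∑ i, X i * ω i

lemma tangentCone_pullback (M : Matrix σ σ R) (ω : σ → MvPolynomial σ R) :
    tangentCone (pullback M ω) = linSubst M (tangentCone ω) := by
  simp only [tangentCone, pullback_apply, map_sum, map_mul, linSubst_X, Finset.mul_sum,
    Finset.sum_mul]
  rw [Finset.sum_comm]
  exact Finset.sum_congr rfl fun i _ => Finset.sum_congr rfl fun j _ => by ring

/-- The Jacobian matrix of a family of polynomials. -/
def jacobianMatrix (ω : σ → MvPolynomial σ R) : Matrix σ σ (MvPolynomial σ R) :=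
  Matrix.of fun i j => pderiv j (ω i)

lemma jacobianMatrix_pullback (M : Matrix σ σ R) (ω : σ → MvPolynomial σ R) :
    jacobianMatrix (pullback M ω) =
      (M.map C).transpose * ((jacobianMatrix ω).map (linSubst M) * M.map C) := by
  ext1 i j
  simp only [jacobianMatrix, Matrix.of_apply, pullback_apply, map_sum, pderiv_C_mul,
    pderiv_linSubst, Matrix.mul_apply, Matrix.transpose_apply, Matrix.map_apply, mul_comm]

lemma det_jacobianMatrix_pullback [DecidableEq σ] (M : Matrix σ σ R)
    (ω : σ → MvPolynomial σ R) :
    (jacobianMatrix (pullback M ω)).det =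
      C (M.det ^ 2) * linSubst M (jacobianMatrix ω).det := by
  have hM : (M.map C).det = (C M.det : MvPolynomial σ R) := (RingHom.map_det C M).symm
  have hJ : ((jacobianMatrix ω).map (linSubst M)).det = linSubst M (jacobianMatrix ω).det :=
    (AlgHom.map_det (linSubst M) _).symm
  rw [jacobianMatrix_pullback, Matrix.det_mul, Matrix.det_mul, Matrix.det_transpose, hM, hJ, C_pow]
  ring

end LinearSubstitution

section InvertibleSubstitution

variable {σ K : Type*} [Fintype σ] [DecidableEq σ] [Field K] {M : Matrix σ σ K}

lemma linSubst_inv_linSubst (hM : IsUnit M.det) (p : MvPolynomial σ K) :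
    linSubst M⁻¹ (linSubst M p) = p := by
  rw [linSubst_linSubst, Matrix.mul_nonsing_inv M hM, linSubst_one]

lemma linSubst_linSubst_inv (hM : IsUnit M.det) (p : MvPolynomial σ K) :
    linSubst M (linSubst M⁻¹ p) = p := by
  rw [linSubst_linSubst, Matrix.nonsing_inv_mul M hM, linSubst_one]

lemma isUnit_of_dvd_pullback (hM : IsUnit M.det) {ω : σ → MvPolynomial σ K}
    (hω : ∀ p, (∀ i, p ∣ ω i) → IsUnit p) {p : MvPolynomial σ K}
    (hp : ∀ i, p ∣ pullback M ω i) : IsUnit p := by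
  have h_dvd := linSubst_dvd_pullback M⁻¹ hp
  rw [pullback_pullback, Matrix.mul_nonsing_inv M hM, pullback_one] at h_dvd
  simpa only [linSubst_linSubst_inv hM] using (hω _ h_dvd).map (linSubst M)

end InvertibleSubstitution

section HomogeneousDivisors

variable {σ R K : Type*} [CommRing R] [Field K]

lemma isHomogeneous_of_mul_left [IsDomain R] {p q : MvPolynomial σ R} {m n : ℕ}
    (hp : p.IsHomogeneous m) (hp0 : p ≠ 0) (hpq : (p * q).IsHomogeneous (m + n)) :
    q.IsHomogeneous n := by
  let _ := gradedAlgebra (σ := σ) (R := R)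
  have h_component : p * homogeneousComponent n q = p * q := by
    have h := DirectSum.coe_decompose_mul_add_of_left_mem (homogeneousSubmodule σ R)
      (i := m) (j := n) (b := q) hp
    rw [DirectSum.decompose_of_mem_same _ hpq] at h
    exact (h.trans (congrArg (p * ·) (decomposition.decompose'_apply q n))).symm
  rw [← mul_left_cancel₀ hp0 h_component]
  exact homogeneousComponent_isHomogeneous n q

lemma irreducible_of_isHomogeneous_one {l : MvPolynomial σ K} (hl : l.IsHomogeneous 1)
    (hl0 : l ≠ 0) : Irreducible l := by
  refine irreducible_of_totalDegree_eq_one (hl.totalDegree hl0) fun x hx => ?_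
  obtain ⟨d, hd⟩ := ne_zero_iff.1 hl0
  exact (ne_zero_of_dvd_ne_zero hd (hx d)).isUnit

lemma exists_eq_sum_C_mul_X [Fintype σ] {l : MvPolynomial σ R} (hl : l.IsHomogeneous 1) :
    ∃ v : σ → R, l = ∑ i, C (v i) * X i := by
  have h_mem : l ∈ Submodule.span R (Set.range X) := by
    rw [← homogeneousSubmodule_one_eq_span_X]
    exact hl
  obtain ⟨v, hv⟩ := (Submodule.mem_span_range_iff_exists_fun R).1 h_mem
  exact ⟨v, by simp only [← hv, smul_eq_C_mul]⟩

end HomogeneousDivisors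

section Contact

variable {σ R : Type*} [CommRing R] [IsDomain R] [CharZero R]

lemma X_pow_succ_dvd_of_X_pow_dvd_wronskian {A B : MvPolynomial σ R} {i : σ} {k : ℕ}
    (hA : ¬ X i ∣ A) (hB : X i ∣ B) (hW : X i ^ k ∣ pderiv i A * B - A * pderiv i B) :
    X i ^ (k + 1) ∣ B := by
  induction k with
  | zero => simpa only [zero_add, pow_one] using hB
  | succ k ih =>
    obtain ⟨Q, rfl⟩ := ih ((pow_dvd_pow _ k.le_succ).trans hW)
    have h_wronskian : pderiv i A * (X i ^ (k + 1) * Q) - A * pderiv i (X i ^ (k + 1) * Q) =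
        X i ^ k * (X i * (pderiv i A * Q - A * pderiv i Q) - C ((k : R) + 1) * (A * Q)) := by
      simp only [pderiv_mul, pderiv_pow, pderiv_X_self, add_tsub_cancel_right, map_add, C_1,
        map_natCast]
      push_cast
      ring
    rw [h_wronskian, pow_succ, mul_dvd_mul_iff_left (pow_ne_zero k (X_ne_zero i)),
      dvd_sub_right (dvd_mul_right _ _)] at hW
    have h_const : ¬ X i ∣ (C ((k : R) + 1) : MvPolynomial σ R) := fun h =>
      Nat.cast_add_one_ne_zero k <| by simpa using map_dvd constantCoeff h
    have hQ : X i ∣ Q :=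
      (X_prime.dvd_or_dvd ((X_prime.dvd_or_dvd hW).resolve_left h_const)).resolve_left hA
    rw [pow_succ]
    exact mul_dvd_mul_left _ hQ

end Contact

section BinaryForms

variable {R : Type*} [CommRing R]

/-- The binary form `∑ i, aᵢ xⁿ⁻ⁱ yⁱ` with coefficients `a`. -/
def binaryForm {n : ℕ} (a : Fin (n + 1) → R) : MvPolynomial (Fin 2) R :=
  ∑ i, C (a i) * X 0 ^ (n - i : ℕ) * X 1 ^ (i : ℕ)

lemma binaryForm_injective {n : ℕ} :
    Function.Injective (binaryForm : (Fin (n + 1) → R) → MvPolynomial (Fin 2) R) := by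
  intro a b hab
  have h_coeff (a : Fin (n + 1) → R) (i : Fin (n + 1)) :
      (aeval ![1, Polynomial.X] (binaryForm a) : Polynomial R).coeff i = a i := by
    simp [binaryForm, Polynomial.coeff_X_pow, Fin.val_inj]
  funext i
  rw [← h_coeff a, hab, h_coeff]

lemma binaryForm_ne_zero {n : ℕ} {a : Fin (n + 1) → R} (ha : a ≠ 0) : binaryForm a ≠ 0 := by
  refine fun h => ha (binaryForm_injective ?_)
  simpa [binaryForm] using h

lemma isHomogeneous_binaryForm {n : ℕ} (a : Fin (n + 1) → R) :
    (binaryForm a).IsHomogeneous n := by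
  refine IsHomogeneous.sum _ _ _ fun i _ => ?_
  have h_term := ((isHomogeneous_X_pow (R := R) (0 : Fin 2) (n - i : ℕ)).C_mul (a i)).mul
    (isHomogeneous_X_pow 1 (i : ℕ))
  rwa [Nat.sub_add_cancel i.is_le] at h_term

lemma binaryForm_linear (a b : R) : binaryForm ![a, b] = C a * X 0 + C b * X 1 := by
  simp [binaryForm]

lemma binaryForm_quadratic (a b c : R) :
    binaryForm ![a, b, c] = C a * X 0 ^ 2 + C b * X 0 * X 1 + C c * X 1 ^ 2 := by
  simp [binaryForm, Fin.sum_univ_three]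

lemma binaryForm_cubic (a b c d : R) :
    binaryForm ![a, b, c, d] =
      C a * X 0 ^ 3 + C b * X 0 ^ 2 * X 1 + C c * X 0 * X 1 ^ 2 + C d * X 1 ^ 3 := by
  simp [binaryForm, Fin.sum_univ_four]

lemma C_mul_binaryForm_quadratic (k a b c : R) :
    C k * binaryForm ![a, b, c] = binaryForm ![k * a, k * b, k * c] := by
  simp only [binaryForm_quadratic, C_mul]
  ring

lemma binaryForm_quadratic_mul_linear (u v w r s : R) :
    binaryForm ![u, v, w] * binaryForm ![r, s] =
      binaryForm ![u * r, u * s + v * r, v * s + w * r, w * s] := by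
  simp only [binaryForm_quadratic, binaryForm_linear, binaryForm_cubic, C_add, C_mul]
  ring

lemma exists_eq_binaryForm_linear {l : MvPolynomial (Fin 2) R} (hl : l.IsHomogeneous 1) :
    ∃ a b : R, l = binaryForm ![a, b] := by
  obtain ⟨v, rfl⟩ := exists_eq_sum_C_mul_X hl
  exact ⟨v 0, v 1, by rw [Fin.sum_univ_two, binaryForm_linear]⟩

lemma exists_eq_X_pow_mul_binaryForm [IsDomain R] {A : MvPolynomial (Fin 2) R} {i : Fin 2}
    {k : ℕ} (hA : A.IsHomogeneous (k + 1)) (hdvd : X i ^ k ∣ A) :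
    ∃ a b : R, A = X i ^ k * binaryForm ![a, b] := by
  obtain ⟨l, rfl⟩ := hdvd
  have hl : l.IsHomogeneous 1 :=
    isHomogeneous_of_mul_left (isHomogeneous_X_pow i k) (pow_ne_zero k (X_ne_zero i)) hA
  obtain ⟨a, b, rfl⟩ := exists_eq_binaryForm_linear hl
  exact ⟨a, b, rfl⟩

end BinaryForms

section PlaneForms

lemma Cpoly_eq_tangentCone (A B : P2) : Cpoly A B = tangentCone ![A, B] := by
  simp only [Cpoly, tangentCone, Fin.sum_univ_two, Matrix.cons_val_zero, Matrix.cons_val_one]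

lemma Dpoly_eq_det_jacobianMatrix (A B : P2) : Dpoly A B = (jacobianMatrix ![A, B]).det := by
  simp only [Dpoly, jacobianMatrix, Matrix.det_fin_two, Matrix.of_apply, Matrix.cons_val_zero,
    Matrix.cons_val_one]

lemma vec_pullback_eta (M : Matrix (Fin 2) (Fin 2) ℂ) (ω : Fin 2 → P2) :
    ![pullback M ω 0, pullback M ω 1] = pullback M ω := by
  funext i
  fin_cases i <;> rfl

lemma Cpoly_pullback (M : Matrix (Fin 2) (Fin 2) ℂ) (A B : P2) :
    Cpoly (pullback M ![A, B] 0) (pullback M ![A, B] 1) = linSubst M (Cpoly A B) := by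
  rw [Cpoly_eq_tangentCone, vec_pullback_eta, tangentCone_pullback, Cpoly_eq_tangentCone]

lemma Dpoly_pullback (M : Matrix (Fin 2) (Fin 2) ℂ) (A B : P2) :
    Dpoly (pullback M ![A, B] 0) (pullback M ![A, B] 1) =
      C (M.det ^ 2) * linSubst M (Dpoly A B) := by
  rw [Dpoly_eq_det_jacobianMatrix, vec_pullback_eta, det_jacobianMatrix_pullback,
    Dpoly_eq_det_jacobianMatrix]

lemma noCommonFactor_pullback {M : Matrix (Fin 2) (Fin 2) ℂ} (hM : IsUnit M.det) {A B : P2}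
    (hAB : NoCommonFactor A B) :
    NoCommonFactor (pullback M ![A, B] 0) (pullback M ![A, B] 1) := fun _ h0 h1 =>
  isUnit_of_dvd_pullback hM (fun p hp => hAB p (hp 0) (hp 1)) (Fin.forall_fin_two.2 ⟨h0, h1⟩)

lemma comp2_eq_linSubst (M : Matrix (Fin 2) (Fin 2) ℂ) :
    comp2 (M 0 0) (M 0 1) (M 1 0) (M 1 1) = linSubst M := by
  funext p
  refine DFunLike.congr_fun (algHom_ext (f := aeval _) fun i => ?_) p
  fin_cases i <;> simp [linSubst_X]

lemma linConj_iff_exists_matrix {A B A' B' : P2} :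
    LinConj A B A' B' ↔ ∃ (M : Matrix (Fin 2) (Fin 2) ℂ) (lam : ℂ), IsUnit M.det ∧ lam ≠ 0 ∧
      pullback M ![A, B] 0 = C lam * A' ∧ pullback M ![A, B] 1 = C lam * B' := by
  constructor
  · rintro ⟨a₁, a₂, a₃, a₄, lam, h_det, h_lam, h_A, h_B⟩
    refine ⟨!![a₁, a₂; a₃, a₄], lam, ?_, h_lam, ?_, ?_⟩
    · rwa [isUnit_iff_ne_zero, Matrix.det_fin_two_of]
    · rw [pullback_apply, ← comp2_eq_linSubst, Fin.sum_univ_two]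
      exact h_A
    · rw [pullback_apply, ← comp2_eq_linSubst, Fin.sum_univ_two]
      exact h_B
  · rintro ⟨M, lam, h_det, h_lam, h_A, h_B⟩
    rw [isUnit_iff_ne_zero, Matrix.det_fin_two] at h_det
    rw [pullback_apply, ← comp2_eq_linSubst, Fin.sum_univ_two] at h_A h_B
    exact ⟨_, _, _, _, lam, h_det, h_lam, h_A, h_B⟩

lemma LinConj.of_pullback {M : Matrix (Fin 2) (Fin 2) ℂ} (hM : IsUnit M.det) {A B A' B' : P2}
    (h : LinConj (pullback M ![A, B] 0) (pullback M ![A, B] 1) A' B') : LinConj A B A' B' := by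
  obtain ⟨N, lam, hN, h_lam, h_A, h_B⟩ := linConj_iff_exists_matrix.1 h
  rw [vec_pullback_eta, pullback_pullback] at h_A h_B
  refine linConj_iff_exists_matrix.2 ⟨M * N, lam, ?_, h_lam, h_A, h_B⟩
  rw [Matrix.det_mul]
  exact hM.mul hN

end PlaneForms

section LinearForms

lemma not_proportional_linSubst {M : Matrix (Fin 2) (Fin 2) ℂ} (hM : IsUnit M.det) {l l' : P2}
    (h : ¬ Proportional l l') : ¬ Proportional (linSubst M l) (linSubst M l') := by
  rintro ⟨t, ht⟩
  have h_inj := Function.LeftInverse.injective (linSubst_inv_linSubst hM)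
  refine h ⟨t, ht.imp ?_ ?_⟩ <;> intro h_eq <;> apply h_inj <;> rw [h_eq, map_mul, linSubst_C]

lemma isRelPrime_of_not_proportional {l l' : P2} (hl : l.IsHomogeneous 1)
    (hl' : l'.IsHomogeneous 1) (h : ¬ Proportional l l') : IsRelPrime l l' := by
  have hl0 : l ≠ 0 := fun h0 => h ⟨0, .inl (by rw [h0, C_0, zero_mul])⟩
  rw [(irreducible_of_isHomogeneous_one hl hl0).isRelPrime_iff_not_dvd]
  rintro ⟨q, rfl⟩
  have hq : q.IsHomogeneous 0 := isHomogeneous_of_mul_left hl hl0 hl'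
  rw [← totalDegree_zero_iff_isHomogeneous, totalDegree_eq_zero_iff_eq_C] at hq
  exact h ⟨coeff 0 q, .inr (by rw [← hq, mul_comm])⟩

lemma isUnit_det_of_not_proportional {N : Matrix (Fin 2) (Fin 2) ℂ}
    (h : ¬ Proportional (∑ j, C (N 0 j) * X j) (∑ j, C (N 1 j) * X j)) : IsUnit N.det := by
  rw [isUnit_iff_ne_zero]
  refine fun h_det => h ?_
  obtain ⟨w, hw0, hw⟩ := Matrix.exists_vecMul_eq_zero_iff.2 h_det
  have h_rel (j : Fin 2) : w 0 * N 0 j + w 1 * N 1 j = 0 := by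
    simpa only [Matrix.vecMul, dotProduct, Fin.sum_univ_two, Pi.zero_apply] using congrFun hw j
  by_cases h0 : w 0 = 0
  · have h1 : w 1 ≠ 0 := fun h1 => hw0 (funext (Fin.forall_fin_two.2 ⟨h0, h1⟩))
    have hN (j : Fin 2) : N 1 j = 0 := by simpa [h0, h1] using h_rel j
    exact ⟨0, .inr (by simp [hN])⟩
  · have hN (j : Fin 2) : N 0 j = -(w 1 / w 0) * N 1 j := by
      field_simp
      linear_combination h_rel j
    exact ⟨-(w 1 / w 0), .inl (by simp only [hN, C_mul, mul_assoc, Finset.mul_sum])⟩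

lemma exists_linSubst_eq_X {l l' : P2} (hl : l.IsHomogeneous 1) (hl' : l'.IsHomogeneous 1)
    (h : ¬ Proportional l l') : ∃ M : Matrix (Fin 2) (Fin 2) ℂ,
      IsUnit M.det ∧ linSubst M l = X 0 ∧ linSubst M l' = X 1 := by
  obtain ⟨v, rfl⟩ := exists_eq_sum_C_mul_X hl
  obtain ⟨v', rfl⟩ := exists_eq_sum_C_mul_X hl'
  let N : Matrix (Fin 2) (Fin 2) ℂ := Matrix.of ![v, v']
  have hN : IsUnit N.det := isUnit_det_of_not_proportional h
  refine ⟨N⁻¹, N.isUnit_nonsing_inv_det hN, ?_, ?_⟩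
  · rw [← linSubst_inv_linSubst hN (X 0), linSubst_X]
    rfl
  · rw [← linSubst_inv_linSubst hN (X 1), linSubst_X]
    rfl

end LinearForms

section CoordinateAxes

lemma X_one_mul_Dpoly {A B : P2} {n : ℕ} (hA : A.IsHomogeneous n) (hB : B.IsHomogeneous n) :
    X 1 * Dpoly A B = (n : P2) * (pderiv 0 A * B - A * pderiv 0 B) := by
  have eulerA := hA.sum_X_mul_pderiv
  have eulerB := hB.sum_X_mul_pderiv
  rw [Fin.sum_univ_two, nsmul_eq_mul] at eulerA eulerB
  rw [Dpoly]
  linear_combination pderiv 0 A * eulerB - pderiv 0 B * eulerA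

lemma X_zero_mul_Dpoly {A B : P2} {n : ℕ} (hA : A.IsHomogeneous n) (hB : B.IsHomogeneous n) :
    X 0 * Dpoly A B = (n : P2) * (pderiv 1 B * A - B * pderiv 1 A) := by
  have eulerA := hA.sum_X_mul_pderiv
  have eulerB := hB.sum_X_mul_pderiv
  rw [Fin.sum_univ_two, nsmul_eq_mul] at eulerA eulerB
  rw [Dpoly]
  linear_combination pderiv 1 B * eulerA - pderiv 1 A * eulerB

lemma dvd_of_dvd_natCast_mul {σ K : Type*} [Field K] [CharZero K] {p q : MvPolynomial σ K}
    {n : ℕ} (hn : n ≠ 0) (h : p ∣ (n : MvPolynomial σ K) * q) : p ∣ q := by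
  have h_unit : IsUnit (n : MvPolynomial σ K) := by
    rw [← map_natCast C]
    exact (Nat.cast_ne_zero.2 hn).isUnit.map C
  exact h_unit.dvd_mul_left.1 h

lemma X_zero_pow_succ_dvd {A B : P2} {n k : ℕ} (hn : n ≠ 0) (hA : A.IsHomogeneous n)
    (hB : B.IsHomogeneous n) (hcop : NoCommonFactor A B) (hC : X 0 ∣ Cpoly A B)
    (hD : X 0 ^ k ∣ Dpoly A B) : X 0 ^ (k + 1) ∣ B := by
  have h_dvd_B : X 0 ∣ B := by
    rw [Cpoly, dvd_add_right (dvd_mul_right _ _)] at hC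
    exact (X_prime.dvd_or_dvd hC).resolve_left (by simp [X_dvd_X])
  refine X_pow_succ_dvd_of_X_pow_dvd_wronskian
    (fun h_dvd_A => X_prime.not_isUnit (hcop _ h_dvd_A h_dvd_B)) h_dvd_B
    (dvd_of_dvd_natCast_mul hn ?_)
  rw [← X_one_mul_Dpoly hA hB]
  exact hD.mul_left _

lemma X_one_pow_succ_dvd {A B : P2} {n k : ℕ} (hn : n ≠ 0) (hA : A.IsHomogeneous n)
    (hB : B.IsHomogeneous n) (hcop : NoCommonFactor A B) (hC : X 1 ∣ Cpoly A B)
    (hD : X 1 ^ k ∣ Dpoly A B) : X 1 ^ (k + 1) ∣ A := by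
  have h_dvd_A : X 1 ∣ A := by
    rw [Cpoly, dvd_add_left (dvd_mul_right _ _)] at hC
    exact (X_prime.dvd_or_dvd hC).resolve_left (by simp [X_dvd_X])
  refine X_pow_succ_dvd_of_X_pow_dvd_wronskian
    (fun h_dvd_B => X_prime.not_isUnit (hcop _ h_dvd_A h_dvd_B)) h_dvd_A
    (dvd_of_dvd_natCast_mul hn ?_)
  rw [← X_zero_mul_Dpoly hA hB]
  exact hD.mul_left _

lemma Cpoly_X_cube_mul_binaryForm (α β γ δ : ℂ) :
    Cpoly (X 1 ^ 3 * binaryForm ![α, β]) (X 0 ^ 3 * binaryForm ![γ, δ]) =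
      X 0 * X 1 * binaryForm ![γ, δ, α, β] := by
  simp only [Cpoly, binaryForm_linear, binaryForm_cubic]
  ring

lemma Dpoly_X_cube_mul_binaryForm (α β γ δ : ℂ) :
    Dpoly (X 1 ^ 3 * binaryForm ![α, β]) (X 0 ^ 3 * binaryForm ![γ, δ]) =
      binaryForm ![-12 * (α * γ), -8 * (α * δ) - 16 * (β * γ), -12 * (β * δ)] *
        (X 0 ^ 2 * X 1 ^ 2) := by
  simp only [Dpoly, binaryForm_linear, binaryForm_quadratic, map_add, pderiv_mul, pderiv_pow,
    pderiv_C, pderiv_X_self, pderiv_X_of_ne (zero_ne_one' (Fin 2)),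
    pderiv_X_of_ne (zero_ne_one' (Fin 2)).symm, C_sub, C_mul, C_neg, map_ofNat]
  push_cast
  ring

lemma exists_eq_X_cube_mul_binaryForm {A B : P2} (hA : A.IsHomogeneous 4) (hB : B.IsHomogeneous 4)
    (hcop : NoCommonFactor A B) (hC : X 0 * X 1 ∣ Cpoly A B)
    (hD : X 0 ^ 2 * X 1 ^ 2 ∣ Dpoly A B) :
    ∃ α β γ δ : ℂ, β ≠ 0 ∧ γ ≠ 0 ∧
      A = X 1 ^ 3 * binaryForm ![α, β] ∧ B = X 0 ^ 3 * binaryForm ![γ, δ] := by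
  have hA_dvd : X 1 ^ 3 ∣ A := X_one_pow_succ_dvd four_ne_zero hA hB hcop
    (dvd_of_mul_left_dvd hC) (dvd_of_mul_left_dvd hD)
  have hB_dvd : X 0 ^ 3 ∣ B := X_zero_pow_succ_dvd four_ne_zero hA hB hcop
    (dvd_of_mul_right_dvd hC) (dvd_of_mul_right_dvd hD)
  obtain ⟨α, β, hA_eq⟩ := exists_eq_X_pow_mul_binaryForm hA hA_dvd
  obtain ⟨γ, δ, hB_eq⟩ := exists_eq_X_pow_mul_binaryForm hB hB_dvd
  refine ⟨α, β, γ, δ, ?_, ?_, hA_eq, hB_eq⟩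
  · rintro rfl
    refine X_prime.not_isUnit (hcop (X 0) ?_ ((dvd_pow_self _ three_ne_zero).trans hB_dvd))
    rw [hA_eq, binaryForm_linear, C_0, zero_mul, add_zero]
    exact (dvd_mul_left _ _).mul_left _
  · rintro rfl
    refine X_prime.not_isUnit (hcop (X 1) ((dvd_pow_self _ three_ne_zero).trans hA_dvd) ?_)
    rw [hB_eq, binaryForm_linear, C_0, zero_mul, zero_add]
    exact (dvd_mul_left _ _).mul_left _

end CoordinateAxes

section NormalForm

-- `u, v, w` are the coefficients of `ℓ₁ℓ₂` and `r, s` those of the remaining linear factor of `C`;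
-- the last three equations say that `D = c ℓ₁ℓ₂x²y²`.
lemma exists_scaling_of_proportional_coeffs {K : Type*} [Field K] [CharZero K]
    {α β γ δ r s u v w c : K}
    (hβ : β ≠ 0) (hγ : γ ≠ 0) (h_disc : v ^ 2 - 4 * u * w ≠ 0)
    (hγ_eq : γ = u * r) (hδ_eq : δ = u * s + v * r) (hα_eq : α = v * s + w * r) (hβ_eq : β = w * s)
    (hu : -12 * (α * γ) = c * u) (hv : -8 * (α * δ) - 16 * (β * γ) = c * v)
    (hw : -12 * (β * δ) = c * w) :
    ∃ t ≠ 0, δ = 4 * t * γ ∧ α = 4 * t ^ 2 * γ ∧ β = t ^ 3 * γ := by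
  obtain ⟨hu0, hr0⟩ : u ≠ 0 ∧ r ≠ 0 := mul_ne_zero_iff.1 (hγ_eq ▸ hγ)
  obtain ⟨hw0, hs0⟩ : w ≠ 0 ∧ s ≠ 0 := mul_ne_zero_iff.1 (hβ_eq ▸ hβ)
  obtain ⟨t, rfl⟩ : ∃ t, s = t * r := ⟨s / r, (div_mul_cancel₀ s hr0).symm⟩
  have hc_left : c = -12 * (α * r) := mul_right_cancel₀ hu0 (by rw [← hu, hγ_eq]; ring)
  have hc_right : c = -12 * (δ * (t * r)) := mul_right_cancel₀ hw0 (by rw [← hw, hβ_eq]; ring)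
  have hwu : w = u * t ^ 2 := by
    refine mul_left_cancel₀ (mul_ne_zero (by norm_num : (12 : K) ≠ 0) (pow_ne_zero 2 hr0)) ?_
    rw [hα_eq] at hc_left
    rw [hδ_eq] at hc_right
    linear_combination hc_left - hc_right
  have hv_cases : (v - 3 * (u * t)) * (v + 2 * (u * t)) = 0 := by
    refine (mul_eq_zero.1 ?_).resolve_left
      (mul_ne_zero (by norm_num : (4 : K) ≠ 0) (mul_ne_zero hs0 hr0))
    subst hc_left hγ_eq hδ_eq hα_eq hβ_eq hwu
    linear_combination hv
  -- The other root `v = -2ut` would make `ℓ₁ℓ₂` a square.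
  have hv_eq : v = 3 * (u * t) := by
    refine sub_eq_zero.1 ((mul_eq_zero.1 hv_cases).resolve_right fun h => h_disc ?_)
    rw [hwu]
    linear_combination (v - 2 * (u * t)) * h
  subst hγ_eq hδ_eq hα_eq hβ_eq hwu hv_eq
  exact ⟨t, left_ne_zero_of_mul hs0, by ring, by ring, by ring⟩

lemma exists_mul_eq_binaryForm_quadratic {l l' : P2} (hl : l.IsHomogeneous 1)
    (hl' : l'.IsHomogeneous 1) (h : ¬ Proportional l l') :
    ∃ u v w : ℂ, l * l' = binaryForm ![u, v, w] ∧ v ^ 2 - 4 * u * w ≠ 0 := by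
  obtain ⟨a, rfl⟩ := exists_eq_sum_C_mul_X hl
  obtain ⟨b, rfl⟩ := exists_eq_sum_C_mul_X hl'
  have h_det := isUnit_det_of_not_proportional (N := Matrix.of ![a, b]) h
  refine ⟨a 0 * b 0, a 0 * b 1 + a 1 * b 0, a 1 * b 1, ?_, ?_⟩
  · simp only [Fin.sum_univ_two, binaryForm_quadratic, C_add, C_mul]
    ring
  · have h_sq : (a 0 * b 1 - a 1 * b 0) ^ 2 ≠ 0 := by
      rw [Matrix.det_fin_two] at h_det
      exact pow_ne_zero 2 h_det.ne_zero
    convert h_sq using 1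
    ring

lemma exists_quadratic_mul_linear_eq {R : Type*} [CommRing R] [IsDomain R]
    {α β γ δ u v w : R} (hβ : β ≠ 0)
    (h : binaryForm ![u, v, w] ∣ binaryForm ![γ, δ, α, β]) :
    ∃ r s : R, γ = u * r ∧ δ = u * s + v * r ∧ α = v * s + w * r ∧ β = w * s := by
  have hq : binaryForm ![u, v, w] ≠ 0 :=
    ne_zero_of_dvd_ne_zero (binaryForm_ne_zero fun h0 => hβ (congrFun h0 3)) h
  obtain ⟨m, hm⟩ := h
  have hm_deg : m.IsHomogeneous 1 :=
    isHomogeneous_of_mul_left (isHomogeneous_binaryForm _) hq (hm ▸ isHomogeneous_binaryForm _)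
  obtain ⟨r, s, rfl⟩ := exists_eq_binaryForm_linear hm_deg
  rw [binaryForm_quadratic_mul_linear] at hm
  have h_coeff := binaryForm_injective hm
  exact ⟨r, s, congrFun h_coeff 0, congrFun h_coeff 1, congrFun h_coeff 2, congrFun h_coeff 3⟩

lemma linConj_A4_B4 {γ t : ℂ} (hγ : γ ≠ 0) (ht : t ≠ 0) :
    LinConj (X 1 ^ 3 * binaryForm ![4 * t ^ 2 * γ, t ^ 3 * γ])
      (X 0 ^ 3 * binaryForm ![γ, 4 * t * γ]) A4 B4 := by
  have h_inv : (C t * C t⁻¹ : P2) = 1 := by rw [← C_mul, mul_inv_cancel₀ ht, C_1]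
  refine ⟨1, 0, 0, t⁻¹, γ * t⁻¹, by simpa using ht, mul_ne_zero hγ (inv_ne_zero ht), ?_, ?_⟩
  · simp only [comp2, A4, binaryForm_linear, map_mul, map_add, map_pow, map_ofNat, aeval_X,
      aeval_C, algebraMap_eq, Matrix.cons_val_zero, Matrix.cons_val_one, C_0, C_1]
    linear_combination (4 * C γ * C t⁻¹ * X 0 * X 1 ^ 3 * (C t * C t⁻¹ + 1) +
      C γ * C t⁻¹ * X 1 ^ 4 * ((C t * C t⁻¹) ^ 2 + C t * C t⁻¹ + 1)) * h_inv
  · simp only [comp2, B4, binaryForm_linear, map_mul, map_add, map_pow, map_ofNat, aeval_X,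
      aeval_C, algebraMap_eq, Matrix.cons_val_zero, Matrix.cons_val_one, C_0, C_1]
    linear_combination 4 * C γ * C t⁻¹ * X 0 ^ 3 * X 1 * h_inv

lemma linConj_of_coordinate_axes {A B l l' : P2} {c : ℂ} (hA : A.IsHomogeneous 4)
    (hB : B.IsHomogeneous 4) (hcop : NoCommonFactor A B) (hl : l.IsHomogeneous 1)
    (hl' : l'.IsHomogeneous 1) (hll' : ¬ Proportional l l')
    (hC : l * l' * (X 0 * X 1) ∣ Cpoly A B)
    (hD : Dpoly A B = C c * (l * l') * (X 0 ^ 2 * X 1 ^ 2)) : LinConj A B A4 B4 := by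
  obtain ⟨α, β, γ, δ, hβ, hγ, rfl, rfl⟩ :=
    exists_eq_X_cube_mul_binaryForm hA hB hcop (dvd_of_mul_left_dvd hC) (hD ▸ dvd_mul_left _ _)
  obtain ⟨u, v, w, h_quad, h_disc⟩ := exists_mul_eq_binaryForm_quadratic hl hl' hll'
  have hXY : (X 0 * X 1 : P2) ≠ 0 := mul_ne_zero (X_ne_zero 0) (X_ne_zero 1)
  have hXY2 : (X 0 ^ 2 * X 1 ^ 2 : P2) ≠ 0 := by rw [← mul_pow]; exact pow_ne_zero 2 hXY
  have h_dvd : binaryForm ![u, v, w] ∣ binaryForm ![γ, δ, α, β] := by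
    rw [Cpoly_X_cube_mul_binaryForm, mul_comm, h_quad] at hC
    exact (mul_dvd_mul_iff_left hXY).1 hC
  obtain ⟨r, s, hγ_eq, hδ_eq, hα_eq, hβ_eq⟩ := exists_quadratic_mul_linear_eq hβ h_dvd
  have h_form : binaryForm ![-12 * (α * γ), -8 * (α * δ) - 16 * (β * γ), -12 * (β * δ)] =
      binaryForm ![c * u, c * v, c * w] := by
    rw [Dpoly_X_cube_mul_binaryForm, h_quad, C_mul_binaryForm_quadratic] at hD
    exact mul_right_cancel₀ hXY2 hD
  have h_coeff := binaryForm_injective h_form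
  obtain ⟨t, ht, rfl, rfl, rfl⟩ := exists_scaling_of_proportional_coeffs hβ hγ h_disc
    hγ_eq hδ_eq hα_eq hβ_eq (congrFun h_coeff 0) (congrFun h_coeff 1) (congrFun h_coeff 2)
  exact linConj_A4_B4 hγ ht

end NormalForm

/-- If the homogeneous foliation `ω = A dx + B dy` of degree 4 is convex of type `2·R₁+2·R₂`,
then `ω` is linearly conjugate to `ω₄ = y³(4x+y)dx + x³(x+4y)dy`. -/
theorem type_two_R1_two_R2_classification
    (A B : P2) (hA : A.IsHomogeneous 4) (hB : B.IsHomogeneous 4)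
    (hcop : NoCommonFactor A B)
    (c : ℂ) (hc : c ≠ 0) (l₁ l₂ l₃ l₄ : P2)
    (h₁ : l₁.IsHomogeneous 1) (h₂ : l₂.IsHomogeneous 1)
    (h₃ : l₃.IsHomogeneous 1) (h₄ : l₄.IsHomogeneous 1)
    (hn₁ : l₁ ≠ 0) (hn₂ : l₂ ≠ 0) (hn₃ : l₃ ≠ 0) (hn₄ : l₄ ≠ 0)
    (hp₁₂ : ¬ Proportional l₁ l₂) (hp₁₃ : ¬ Proportional l₁ l₃)
    (hp₁₄ : ¬ Proportional l₁ l₄) (hp₂₃ : ¬ Proportional l₂ l₃)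
    (hp₂₄ : ¬ Proportional l₂ l₄) (hp₃₄ : ¬ Proportional l₃ l₄)
    (hdvd₁ : l₁ ∣ Cpoly A B) (hdvd₂ : l₂ ∣ Cpoly A B)
    (hdvd₃ : l₃ ∣ Cpoly A B) (hdvd₄ : l₄ ∣ Cpoly A B)
    (hD : Dpoly A B = C c * l₁ * l₂ * l₃ ^ 2 * l₄ ^ 2) :
    LinConj A B A4 B4 := by
  have h_rel : IsRelPrime (l₁ * l₂) (l₃ * l₄) :=
    .mul_left
      (.mul_right (isRelPrime_of_not_proportional h₁ h₃ hp₁₃)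
        (isRelPrime_of_not_proportional h₁ h₄ hp₁₄))
      (.mul_right (isRelPrime_of_not_proportional h₂ h₃ hp₂₃)
        (isRelPrime_of_not_proportional h₂ h₄ hp₂₄))
  have h_lines : l₁ * l₂ * (l₃ * l₄) ∣ Cpoly A B :=
    h_rel.mul_dvd ((isRelPrime_of_not_proportional h₁ h₂ hp₁₂).mul_dvd hdvd₁ hdvd₂)
      ((isRelPrime_of_not_proportional h₃ h₄ hp₃₄).mul_dvd hdvd₃ hdvd₄)
  obtain ⟨M, hM, hM₃, hM₄⟩ := exists_linSubst_eq_X h₃ h₄ hp₃₄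
  have h_homog := isHomogeneous_pullback M (ω := ![A, B]) (Fin.forall_fin_two.2 ⟨hA, hB⟩)
  refine LinConj.of_pullback hM (linConj_of_coordinate_axes (c := M.det ^ 2 * c)
    (h_homog 0) (h_homog 1) (noCommonFactor_pullback hM hcop)
    (isHomogeneous_linSubst M h₁) (isHomogeneous_linSubst M h₂)
    (not_proportional_linSubst hM hp₁₂) ?_ ?_)
  · rw [Cpoly_pullback, ← hM₃, ← hM₄, ← map_mul, ← map_mul, ← map_mul]
    exact map_dvd (linSubst M) h_lines
  · rw [Dpoly_pullback, hD, ← hM₃, ← hM₄]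
    simp only [map_mul, map_pow, linSubst_C]
    ring
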